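/- arXiv:2302.05365 — 2 statements merged into one kernel-verified Lean document; each statement's English description precedes it below -/
import Mathlib

section
/- Let n ≥ 1 and k ≥ 1 be integers with gcd(k, n+1) = 1. Then for every integer d with 0 ≤ d ≤ nk+1, one has (N_{d,k} − N_{d−1,k}) − (N_{nk+1−d,k} − N_{nk−d,k}) = q_d, where q_d is the coefficient of t^d in Q_{n,k} (an equality of rational numbers after casting the integer left-hand side to ℚ). -/
/-!
Let `G` be the Gaussian binomial coefficient `[n + k choose k]`, the generating polynomial of the
tuples `I` of sum `k` by the weight `∑ i * I i`. Then `∑ N_{d,k} t^d = G / (1 - t^(n+1))` and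
`Q = (1 - t) G`, so the differences `r_d = N_{d,k} - N_{d-1,k}` satisfy `q_d = r_d - r_{d-n-1}`.
The claim is therefore the symmetry `r_{n(k-1)-d} = r_d`. Coprimality of `k` and `n + 1` makes
`1 - t^(n+1)` divide `(1 - t) G`, so `∑ r_d t^d` is a polynomial; it is palindromic of formal degree
`n (k - 1)` because `G` is palindromic of formal degree `n k`.
-/

/-- `N_{d,k}`: the number of tuples `(a, I₀, …, I_n) ∈ ℕ^{n+2}` with `I₀ + ⋯ + I_n = k` and
`(n+1)·a + I₁ + 2I₂ + ⋯ + n·I_n = d`.  The index `d` ranges over `ℤ`, so that `N_{d,k} = 0`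
for `d < 0`. -/
noncomputable def kloostermanN (n k : ℕ) (d : ℤ) : ℕ :=
  Nat.card {p : ℕ × (Fin (n + 1) → ℕ) //
    (∑ i, p.2 i) = k ∧
    (((n + 1) * p.1 + ∑ i : Fin (n + 1), (i : ℕ) * p.2 i : ℕ) : ℤ) = d}

open Finset Polynomial

/-- The weight `I₁ + 2 I₂ + ⋯ + (m - 1) I_{m-1}` of a tuple `(I₀, …, I_{m-1})`, by which the
Gaussian binomial coefficients count tuples. -/
def tupleWeight {m : ℕ} (I : Fin m → ℕ) : ℕ :=
  ∑ i : Fin m, (i : ℕ) * I i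

lemma tupleWeight_eq_sum_tail_add {m : ℕ} (I : Fin (m + 1) → ℕ) :
    tupleWeight I = ∑ i, Fin.tail I i + tupleWeight (Fin.tail I) := by
  simp [tupleWeight, Fin.sum_univ_succ, Fin.tail, add_mul, sum_add_distrib, add_comm]

lemma tupleWeight_comp_rev_add {m : ℕ} (I : Fin (m + 1) → ℕ) :
    tupleWeight (I ∘ Fin.rev) + tupleWeight I = m * ∑ i, I i := by
  have hrev : tupleWeight (I ∘ Fin.rev) = ∑ i : Fin (m + 1), (i.rev : ℕ) * I i :=
    Fintype.sum_equiv Fin.revPerm _ _ (by simp)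
  rw [hrev, tupleWeight, ← sum_add_distrib, mul_sum]
  refine sum_congr rfl fun i _ => ?_
  rw [← add_mul, Fin.val_rev]
  congr 1
  omega

/-- The `q`-analogue of `Nat.multichoose m k`, i.e. the Gaussian binomial coefficient
`[m + k - 1 choose k]`, as the generating polynomial by weight of the tuples `(I₀, …, I_{m-1})`
of natural numbers with sum `k`. -/
noncomputable def qMultichoose (R : Type*) [Semiring R] (m k : ℕ) : R[X] :=
  ∑ I ∈ Nat.antidiagonalTuple m k, X ^ tupleWeight I

section Semiring

variable (R : Type*) [Semiring R]

lemma coeff_qMultichoose (m k d : ℕ) :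
    (qMultichoose R m k).coeff d = #{I ∈ Nat.antidiagonalTuple m k | tupleWeight I = d} := by
  simp [qMultichoose, coeff_X_pow, sum_boole, eq_comm]

lemma qMultichoose_zero_right (m : ℕ) : qMultichoose R m 0 = 1 := by
  simp [qMultichoose, tupleWeight, Nat.antidiagonalTuple_zero_right]

lemma qMultichoose_zero_succ (k : ℕ) : qMultichoose R 0 (k + 1) = 0 := by
  simp [qMultichoose]

/-- The entry `I₀` has weight zero, and removing it lowers every other index by one. -/
lemma qMultichoose_succ_left (m k : ℕ) :
    qMultichoose R (m + 1) k = ∑ p ∈ antidiagonal k, X ^ p.2 * qMultichoose R m p.2 := by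
  simp only [qMultichoose, mul_sum]
  rw [sum_sigma']
  refine sum_bij' (fun I _ => ⟨(I 0, ∑ i, Fin.tail I i), Fin.tail I⟩)
    (fun s _ => Fin.cons s.1.1 s.2) ?_ ?_ ?_ ?_ ?_
  · intro I hI
    simp only [Nat.mem_antidiagonalTuple, Fin.sum_univ_succ] at hI
    simp [Nat.mem_antidiagonalTuple, Fin.tail, hI]
  · rintro ⟨⟨a, b⟩, J⟩ h
    simp only [mem_sigma, HasAntidiagonal.mem_antidiagonal, Nat.mem_antidiagonalTuple] at h
    simp [Nat.mem_antidiagonalTuple, Fin.sum_univ_succ, h]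
  · simp
  · rintro ⟨⟨a, b⟩, J⟩ h
    simp only [mem_sigma, HasAntidiagonal.mem_antidiagonal, Nat.mem_antidiagonalTuple] at h
    obtain ⟨-, rfl⟩ := h
    simp
  · intro I _
    rw [← pow_add, tupleWeight_eq_sum_tail_add]

/-- The terms with `I₀ > 0` give the first summand, those with `I₀ = 0` the second. -/
lemma qMultichoose_succ_succ (m k : ℕ) :
    qMultichoose R (m + 1) (k + 1) =
      qMultichoose R (m + 1) k + X ^ (k + 1) * qMultichoose R m (k + 1) := by
  rw [qMultichoose_succ_left, qMultichoose_succ_left, Nat.antidiagonal_succ, sum_cons, sum_map,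
    add_comm]
  rfl

lemma natDegree_qMultichoose_succ_le (m k : ℕ) :
    (qMultichoose R (m + 1) k).natDegree ≤ m * k := by
  refine natDegree_sum_le_of_forall_le _ _ fun I hI => (natDegree_X_pow_le _).trans ?_
  rw [← Nat.mem_antidiagonalTuple.mp hI, ← tupleWeight_comp_rev_add]
  exact Nat.le_add_left _ _

lemma reflect_qMultichoose_succ (m k : ℕ) :
    reflect (m * k) (qMultichoose R (m + 1) k) = qMultichoose R (m + 1) k := by
  ext d
  rw [coeff_reflect, qMultichoose, finsetSum_coeff, finsetSum_coeff]
  simp_rw [← coeff_reflect, reflect_monomial]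
  refine sum_nbij' (· ∘ Fin.rev) (· ∘ Fin.rev) ?_ ?_ ?_ ?_ fun I hI => ?_
  · intro I hI
    simpa [Nat.mem_antidiagonalTuple, Fin.rev_involutive.bijective.sum_comp] using hI
  · intro I hI
    simpa [Nat.mem_antidiagonalTuple, Fin.rev_involutive.bijective.sum_comp] using hI
  · simp [Function.comp_assoc, Fin.rev_involutive.comp_self]
  · simp [Function.comp_assoc, Fin.rev_involutive.comp_self]
  · have hweight := tupleWeight_comp_rev_add I
    rw [Nat.mem_antidiagonalTuple.mp hI] at hweight
    rw [revAt_le (by omega), ← hweight, Nat.add_sub_cancel]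

end Semiring

section CommRing

variable {R : Type*} [CommRing R]

lemma one_sub_X_pow_mul_qMultichoose_succ_right (m k : ℕ) :
    (1 - X ^ (k + 1)) * qMultichoose R m (k + 1) = (1 - X ^ m) * qMultichoose R (m + 1) k := by
  induction m generalizing k with
  | zero => simp [qMultichoose_zero_succ]
  | succ m ihm =>
    induction k with
    | zero =>
      have h := ihm 0
      rw [qMultichoose_zero_right] at h
      rw [qMultichoose_succ_succ, qMultichoose_zero_right, qMultichoose_zero_right]
      linear_combination X * h
    | succ k ihk =>
      rw [qMultichoose_succ_succ R m, qMultichoose_succ_succ R (m + 1)]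
      linear_combination X ^ (k + 2) * ihm (k + 1) + ihk

lemma one_sub_X_pow_mul_qMultichoose_succ_succ (m k : ℕ) :
    (1 - X ^ (k + 1)) * qMultichoose R (m + 1) (k + 1) =
      (1 - X ^ (m + (k + 1))) * qMultichoose R (m + 1) k := by
  rw [qMultichoose_succ_succ]
  linear_combination X ^ (k + 1) * one_sub_X_pow_mul_qMultichoose_succ_right (R := R) m k

lemma qMultichoose_succ_mul_prod (m k : ℕ) :
    qMultichoose R (m + 1) k * ∏ i ∈ Icc 1 k, (1 - X ^ i) = ∏ i ∈ Icc 1 k, (1 - X ^ (m + i)) := by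
  induction k with
  | zero => simp [qMultichoose_zero_right]
  | succ k ih =>
    rw [prod_Icc_succ_top (by omega), prod_Icc_succ_top (by omega), ← ih]
    linear_combination
      (∏ i ∈ Icc 1 k, (1 - X ^ i)) * one_sub_X_pow_mul_qMultichoose_succ_succ (R := R) m k

lemma dvd_one_sub_pow_gcd_mul {x y z : R} (a b : ℕ) (ha : z ∣ (1 - x ^ a) * y)
    (hb : z ∣ (1 - x ^ b) * y) : z ∣ (1 - x ^ a.gcd b) * y := by
  induction a, b using Nat.gcd.induction with
  | H0 b => simpa using hb
  | H1 a b _ ih =>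
    rw [Nat.gcd_rec]
    refine ih ?_ ha
    have hmul : z ∣ (1 - x ^ (a * (b / a))) * y := by
      rw [pow_mul]
      exact ha.trans (mul_dvd_mul_right (one_sub_dvd_one_sub_pow _ _) y)
    have hsplit : (1 - x ^ (b % a)) * y =
        (1 - x ^ b) * y - x ^ (b % a) * ((1 - x ^ (a * (b / a))) * y) := by
      have hpow : x ^ b = x ^ (b % a) * x ^ (a * (b / a)) := by
        rw [← pow_add, Nat.mod_add_div]
      rw [hpow]
      ring
    rw [hsplit]
    exact dvd_sub hb (hmul.mul_left _)

/-- For `G = qMultichoose R m (k + 1)`, both `(1 - X ^ (k + 1)) * G` and `(1 - X ^ m) * G` are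
multiples of `1 - X ^ m`. -/
lemma one_sub_X_pow_dvd_one_sub_X_mul_qMultichoose {m k : ℕ} (h : (k + 1).Coprime m) :
    (1 - X ^ m : R[X]) ∣ (1 - X) * qMultichoose R m (k + 1) := by
  have hdvd := dvd_one_sub_pow_gcd_mul (k + 1) m
    (Dvd.intro _ (one_sub_X_pow_mul_qMultichoose_succ_right (R := R) m k).symm)
    (dvd_mul_right (1 - X ^ m) (qMultichoose R m (k + 1)))
  rwa [h.gcd_eq_one, pow_one] at hdvd

lemma coeff_one_sub_X_pow_mul_mk {f : ℤ → R} (hf : ∀ d < 0, f d = 0) (m d : ℕ) :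
    PowerSeries.coeff d ((1 - PowerSeries.X ^ m) * PowerSeries.mk fun e : ℕ => f e) =
      f d - f (d - m) := by
  rw [sub_mul, one_mul, map_sub, PowerSeries.coeff_X_pow_mul', PowerSeries.coeff_mk]
  split_ifs with h
  · rw [PowerSeries.coeff_mk, Nat.cast_sub h]
  · rw [hf (d - m) (by omega)]

lemma reflect_one_sub_X_pow (m : ℕ) : reflect m (1 - X ^ m : R[X]) = -(1 - X ^ m) := by
  simp [reflect_sub, revAt_le]

lemma natDegree_one_sub_X_pow [Nontrivial R] (m : ℕ) : (1 - X ^ m : R[X]).natDegree = m := by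
  rw [natDegree_sub, ← C_1, natDegree_X_pow_sub_C]

lemma one_sub_X_pow_ne_zero [Nontrivial R] {m : ℕ} (hm : m ≠ 0) : (1 - X ^ m : R[X]) ≠ 0 :=
  ne_zero_of_natDegree_gt (n := 0) (by rw [natDegree_one_sub_X_pow]; omega)

section IsDomain

variable [IsDomain R]

lemma natDegree_le_of_one_sub_X_pow_mul_eq {a b M N : ℕ} {P G : R[X]} (ha : a ≠ 0)
    (h : (1 - X ^ a) * P = (1 - X ^ b) * G) (hMN : a + M = b + N) (hG : G.natDegree ≤ N) :
    P.natDegree ≤ M := by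
  obtain rfl | hP := eq_or_ne P 0
  · simp
  have hdeg : a + P.natDegree ≤ b + G.natDegree := by
    calc a + P.natDegree = ((1 - X ^ a) * P).natDegree := by
          rw [natDegree_mul (one_sub_X_pow_ne_zero ha) hP, natDegree_one_sub_X_pow]
      _ = ((1 - X ^ b) * G).natDegree := by rw [h]
      _ ≤ b + G.natDegree := natDegree_mul_le.trans_eq (by rw [natDegree_one_sub_X_pow])
  omega

lemma reflect_eq_self_of_one_sub_X_pow_mul_eq {a b M N : ℕ} {P G : R[X]} (ha : a ≠ 0)
    (h : (1 - X ^ a) * P = (1 - X ^ b) * G) (hMN : a + M = b + N) (hG : G.natDegree ≤ N)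
    (hrefl : reflect N G = G) : reflect M P = P := by
  have hP : P.natDegree ≤ M := natDegree_le_of_one_sub_X_pow_mul_eq ha h hMN hG
  have hreflect := congrArg (reflect (a + M)) h
  nth_rw 2 [hMN] at hreflect
  rw [reflect_mul _ _ (natDegree_one_sub_X_pow a).le hP,
    reflect_mul _ _ (natDegree_one_sub_X_pow b).le hG, reflect_one_sub_X_pow,
    reflect_one_sub_X_pow, hrefl] at hreflect
  refine mul_left_cancel₀ (one_sub_X_pow_ne_zero ha) ?_
  linear_combination -hreflect - h

lemma eq_one_sub_X_mul_qMultichoose {n k : ℕ} (hk : 1 ≤ k) {Q : R[X]}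
    (hQ : Q * ∏ i ∈ Icc 2 k, (1 - X ^ i) = ∏ i ∈ Icc 1 k, (1 - X ^ (n + i))) :
    Q = (1 - X) * qMultichoose R (n + 1) k := by
  have hne : ∏ i ∈ Icc 2 k, (1 - X ^ i : R[X]) ≠ 0 :=
    prod_ne_zero_iff.mpr fun i hi => one_sub_X_pow_ne_zero (by grind)
  have hsplit : (1 - X) * ∏ i ∈ Icc 2 k, (1 - X ^ i) = ∏ i ∈ Icc 1 k, (1 - X ^ i : R[X]) := by
    simpa [← Icc_add_one_left_eq_Ioc] using mul_prod_Ioc_eq_prod_Icc (f := fun i => 1 - X ^ i) hk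
  refine mul_right_cancel₀ hne ?_
  rw [hQ, ← qMultichoose_succ_mul_prod, ← hsplit, mul_left_comm, mul_assoc]

end IsDomain

end CommRing

section Kloosterman

open scoped Classical in
/-- The entry `a` of a tuple `(a, I)` is determined by `I` and `d`. -/
lemma kloostermanN_eq_card (n k : ℕ) (d : ℤ) :
    kloostermanN n k d = #{I ∈ Nat.antidiagonalTuple (n + 1) k |
      ∃ a : ℕ, (((n + 1) * a + tupleWeight I : ℕ) : ℤ) = d} := by
  rw [kloostermanN, ← Nat.subtype_card _ fun _ => Iff.rfl]
  refine Nat.card_congr (Equiv.ofBijective (fun p => ⟨p.1.2, mem_filter.mpr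
    ⟨Nat.mem_antidiagonalTuple.mpr p.2.1, p.1.1, p.2.2⟩⟩) ⟨?_, ?_⟩)
  · rintro ⟨⟨a, I⟩, _, ha⟩ ⟨⟨b, J⟩, _, hb⟩ hIJ
    obtain rfl : I = J := congrArg Subtype.val hIJ
    have hab : (n + 1) * a = (n + 1) * b := by
      simp only at ha hb
      omega
    simp [Nat.eq_of_mul_eq_mul_left n.succ_pos hab]
  · rintro ⟨I, hI⟩
    obtain ⟨hsum, a, ha⟩ := mem_filter.mp hI
    exact ⟨⟨(a, I), Nat.mem_antidiagonalTuple.mp hsum, ha⟩, rfl⟩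

lemma kloostermanN_of_neg (n k : ℕ) {d : ℤ} (hd : d < 0) : kloostermanN n k d = 0 := by
  classical
  rw [kloostermanN_eq_card, card_eq_zero, filter_eq_empty_iff]
  rintro I - ⟨a, ha⟩
  omega

lemma kloostermanN_eq_add (n k : ℕ) (d : ℤ) :
    kloostermanN n k d = kloostermanN n k (d - (n + 1)) +
      #{I ∈ Nat.antidiagonalTuple (n + 1) k | (tupleWeight I : ℤ) = d} := by
  classical
  rw [kloostermanN_eq_card, kloostermanN_eq_card, ← card_union_of_disjoint, ← filter_or]
  · congr 1
    refine filter_congr fun I _ => ⟨?_, ?_⟩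
    · rintro ⟨_ | a, ha⟩
      · exact .inr (by simpa using ha)
      · exact .inl ⟨a, by push_cast at ha ⊢; linarith⟩
    · rintro (⟨a, ha⟩ | h)
      · exact ⟨a + 1, by push_cast at ha ⊢; linarith⟩
      · exact ⟨0, by simpa using h⟩
  · refine disjoint_filter.mpr fun I _ => ?_
    rintro ⟨a, ha⟩ h
    push_cast at ha
    have hnonneg : (0 : ℤ) ≤ (n + 1) * a := by positivity
    linarith

/-- The difference `r_d = N_{d,k} - N_{d-1,k}`, the `d`-th coefficient of `(1 - t) ∑ N_{d,k} t^d`;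
as for `kloostermanN`, it is indexed by `ℤ` and vanishes for `d < 0`. -/
noncomputable def kloostermanDiff (n k : ℕ) (d : ℤ) : ℤ :=
  kloostermanN n k d - kloostermanN n k (d - 1)

lemma kloostermanDiff_of_neg (n k : ℕ) {d : ℤ} (hd : d < 0) : kloostermanDiff n k d = 0 := by
  simp [kloostermanDiff, kloostermanN_of_neg n k hd, kloostermanN_of_neg n k (by omega : d - 1 < 0)]

variable (R : Type*) [CommRing R]

lemma one_sub_X_pow_mul_mk_kloostermanN (n k : ℕ) :
    (1 - PowerSeries.X ^ (n + 1)) * PowerSeries.mk (fun d : ℕ => (kloostermanN n k d : R)) =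
      (qMultichoose R (n + 1) k : PowerSeries R) := by
  ext d
  rw [coeff_one_sub_X_pow_mul_mk (f := fun d => (kloostermanN n k d : R))
    fun d hd => by simp [kloostermanN_of_neg n k hd]]
  simp [kloostermanN_eq_add n k d, coeff_qMultichoose]

lemma one_sub_X_mul_mk_kloostermanN (n k : ℕ) :
    (1 - PowerSeries.X) * PowerSeries.mk (fun d : ℕ => (kloostermanN n k d : R)) =
      PowerSeries.mk fun d : ℕ => (kloostermanDiff n k d : R) := by
  ext d
  rw [← pow_one PowerSeries.X, coeff_one_sub_X_pow_mul_mk (f := fun d => (kloostermanN n k d : R))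
    fun d hd => by simp [kloostermanN_of_neg n k hd]]
  simp [kloostermanDiff]

lemma one_sub_X_pow_mul_mk_kloostermanDiff (n k : ℕ) :
    (1 - PowerSeries.X ^ (n + 1)) * PowerSeries.mk (fun d : ℕ => (kloostermanDiff n k d : R)) =
      (((1 - X) * qMultichoose R (n + 1) k : R[X]) : PowerSeries R) := by
  rw [← one_sub_X_mul_mk_kloostermanN, mul_left_comm, one_sub_X_pow_mul_mk_kloostermanN]
  simp

lemma coeff_one_sub_X_mul_qMultichoose_succ (n k d : ℕ) :
    ((1 - X) * qMultichoose R (n + 1) k).coeff d =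
      ((kloostermanDiff n k d - kloostermanDiff n k (d - (n + 1)) : ℤ) : R) := by
  rw [← Polynomial.coeff_coe, ← one_sub_X_pow_mul_mk_kloostermanDiff,
    coeff_one_sub_X_pow_mul_mk (f := fun d => (kloostermanDiff n k d : R))
      fun d hd => by simp [kloostermanDiff_of_neg n k hd]]
  simp

variable {R}

lemma kloostermanDiff_natCast_eq_coeff {n k : ℕ} {P : R[X]}
    (hP : (1 - X) * qMultichoose R (n + 1) k = (1 - X ^ (n + 1)) * P) (d : ℕ) :
    (kloostermanDiff n k d : R) = P.coeff d := by
  have hunit : IsUnit (1 - PowerSeries.X ^ (n + 1) : PowerSeries R) :=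
    PowerSeries.isUnit_iff_constantCoeff.mpr (by simp)
  have hseries : PowerSeries.mk (fun d : ℕ => (kloostermanDiff n k d : R)) = P := by
    refine hunit.mul_left_cancel ?_
    rw [one_sub_X_pow_mul_mk_kloostermanDiff, hP]
    simp
  rw [← Polynomial.coeff_coe, ← hseries, PowerSeries.coeff_mk]

theorem kloostermanDiff_succ_sub {n k : ℕ} (h : (k + 1).Coprime (n + 1)) (d : ℤ) :
    kloostermanDiff n (k + 1) (n * k - d) = kloostermanDiff n (k + 1) d := by
  obtain ⟨P, hP⟩ := one_sub_X_pow_dvd_one_sub_X_mul_qMultichoose (R := ℤ) h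
  have hcoeff (e : ℕ) : kloostermanDiff n (k + 1) e = P.coeff e :=
    kloostermanDiff_natCast_eq_coeff hP e
  have hP' : (1 - X ^ (n + 1)) * P = (1 - X ^ 1) * qMultichoose ℤ (n + 1) (k + 1) := by
    rw [pow_one, hP]
  have hMN : n + 1 + n * k = 1 + n * (k + 1) := by ring
  have hG := natDegree_qMultichoose_succ_le ℤ n (k + 1)
  have hdeg : P.natDegree ≤ n * k :=
    natDegree_le_of_one_sub_X_pow_mul_eq n.succ_ne_zero hP' hMN hG
  have hrefl : reflect (n * k) P = P :=
    reflect_eq_self_of_one_sub_X_pow_mul_eq n.succ_ne_zero hP' hMN hG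
      (reflect_qMultichoose_succ ℤ n (k + 1))
  have hlarge (e : ℤ) (he : n * k < e) : kloostermanDiff n (k + 1) e = 0 := by
    lift e to ℕ using le_trans (by positivity) he.le
    rw [hcoeff, coeff_eq_zero_of_natDegree_lt (by omega)]
  obtain hd | hd := lt_or_ge d 0
  · rw [hlarge _ (by omega), kloostermanDiff_of_neg n _ hd]
  obtain hd' | hd' := lt_or_ge (n * k : ℤ) d
  · rw [hlarge d hd', kloostermanDiff_of_neg n _ (by omega)]
  lift d to ℕ using hd
  have hle : d ≤ n * k := by exact_mod_cast hd'
  rw [show (n * k - d : ℤ) = (n * k - d : ℕ) by push_cast [hle]; rfl, hcoeff, hcoeff]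
  nth_rw 2 [← hrefl]
  rw [coeff_reflect, revAt_le hle]

end Kloosterman

theorem kloosterman_n_antisymmetry_defect_general {R : Type*} [CommRing R] [IsDomain R] {n k : ℕ}
    (hk : 1 ≤ k) (hgcd : Nat.gcd k (n + 1) = 1) {Q : R[X]}
    (hQ : Q * ∏ i ∈ Icc 2 k, (1 - X ^ i) = ∏ i ∈ Icc 1 k, (1 - X ^ (n + i))) (d : ℕ) :
    (((kloostermanN n k d : ℤ) - kloostermanN n k ((d : ℤ) - 1)) -
      ((kloostermanN n k (((n * k + 1 : ℕ) : ℤ) - d) : ℤ) -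
        kloostermanN n k (((n * k : ℕ) : ℤ) - d)) : R) = Q.coeff d := by
  obtain ⟨k, rfl⟩ := Nat.exists_eq_add_of_le' hk
  rw [eq_one_sub_X_mul_qMultichoose hk hQ, coeff_one_sub_X_mul_qMultichoose_succ,
    ← kloostermanDiff_succ_sub hgcd (d - (n + 1)), kloostermanDiff, kloostermanDiff]
  have hfst : (n * k - (d - (n + 1)) : ℤ) = (n * (k + 1) + 1 : ℕ) - d := by
    push_cast
    ring
  have hsnd : (n * k - (d - (n + 1)) - 1 : ℤ) = (n * (k + 1) : ℕ) - d := by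
    push_cast
    ring
  rw [hsnd, hfst]
  push_cast
  rfl

/-- For `n ≥ 1`, `k ≥ 1` with `gcd(k, n+1) = 1`, and `Q = Q_{n,k}` the
quotient of `∏_{i=1}^{k}(1 - t^{n+i})` by `∏_{i=2}^{k}(1 - t^i)`, for every `0 ≤ d ≤ nk+1`
one has `(N_{d,k} - N_{d-1,k}) - (N_{nk+1-d,k} - N_{nk-d,k}) = q_d`, where `q_d` is the
coefficient of `t^d` in `Q` (an equality in `ℚ`). -/
theorem kloosterman_n_antisymmetry_defect (n k : ℕ) (hn : 1 ≤ n) (hk : 1 ≤ k)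
    (hgcd : Nat.gcd k (n + 1) = 1) (Q : Polynomial ℚ)
    (hQ : Q * ∏ i ∈ Finset.Icc 2 k, (1 - (Polynomial.X : Polynomial ℚ) ^ i) =
      ∏ i ∈ Finset.Icc 1 k, (1 - (Polynomial.X : Polynomial ℚ) ^ (n + i))) :
    ∀ d : ℕ, d ≤ n * k + 1 →
      (((kloostermanN n k d : ℤ) - kloostermanN n k ((d : ℤ) - 1)) -
        ((kloostermanN n k (((n * k + 1 : ℕ) : ℤ) - d) : ℤ) -
          kloostermanN n k (((n * k : ℕ) : ℤ) - d)) : ℚ) = Q.coeff d :=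
  fun d _ => kloosterman_n_antisymmetry_defect_general hk hgcd hQ d
end

section
/- Let V be a finite-dimensional ℂ-vector space, N : V → V a nilpotent linear map, and E : V → V any linear map. Define the ℂ-linear map θ on finitely supported families f = (f_p)_{p∈ℤ} with values in V (i.e. on V[z, z⁻¹]) by θ(f)_p = p·f_p + N(f_p) + E(f_{p−1}); θ preserves the subspace V[z] of families supported on ℕ. Then: (i) every f ∈ V[z, z⁻¹] with θ(f) ∈ V[z] lies in V[z] — in particular ker(θ on V[z,z⁻¹]) = ker(θ on V[z]); and (ii) V[z, z⁻¹] = V[z] + θ(V[z, z⁻¹]). Consequently, the inclusion V[z] ⊆ V[z, z⁻¹] induces isomorphisms both on kernels and on cokernels of θ. -/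
/-!
Filter `V[z, z⁻¹]` by the subspaces `zᵐ V[z]`. On the quotient `zᵐ V[z] / zᵐ⁺¹ V[z] ≅ V` the
operator `θ` acts by `m + N`, a unit plus a commuting nilpotent when `m ≠ 0`. Hence for `m < 0` an
element of `zᵐ V[z]` which `θ` sends into `zᵐ⁺¹ V[z]` already lies in `zᵐ⁺¹ V[z]`, and
`zᵐ V[z] ⊆ zᵐ⁺¹ V[z] + im θ`. Climbing the filtration up to `m = 0` gives both statements.
-/

open Finsupp (supported)

section Filtration

variable {R V : Type*} [Semiring R] [AddCommMonoid V] [Module R V]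

theorem mem_supported_Ici {m : ℤ} {f : ℤ →₀ V} :
    f ∈ supported V R (Set.Ici m) ↔ ∀ p < m, f p = 0 := by
  simp only [Finsupp.mem_supported', Set.mem_Ici, not_le]

theorem mem_supported_Ici_add_one {m : ℤ} {f : ℤ →₀ V} :
    f ∈ supported V R (Set.Ici (m + 1)) ↔ f ∈ supported V R (Set.Ici m) ∧ f m = 0 := by
  simp only [mem_supported_Ici, Int.lt_add_one_iff, le_iff_lt_or_eq, or_imp, forall_and,
    forall_eq]

theorem exists_le_mem_supported_Ici (f : ℤ →₀ V) (a : ℤ) :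
    ∃ m ≤ a, f ∈ supported V R (Set.Ici m) := by
  obtain ⟨b, hb⟩ := f.support.bddBelow
  refine ⟨min a b, min_le_left a b, fun p hp => ?_⟩
  exact (min_le_right a b).trans (hb hp)

end Filtration

section Bidiagonal

variable {R V W : Type*} [Semiring R] [AddCommMonoid V] [Module R V] [AddCommMonoid W] [Module R W]

/-- The operator `V[z, z⁻¹] → W[z, z⁻¹]` with diagonal part `D` and subdiagonal part `E`: it sends
`v zᵖ` to `D p v zᵖ + E p v zᵖ⁺¹`. Laurent polynomials are encoded as `ℤ →₀ V`. -/
noncomputable def bidiagonal (D E : ℤ → V →ₗ[R] W) : (ℤ →₀ V) →ₗ[R] (ℤ →₀ W) :=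
  Finsupp.lsum ℕ fun p => Finsupp.lsingle p ∘ₗ D p + Finsupp.lsingle (p + 1) ∘ₗ E p

variable {D E : ℤ → V →ₗ[R] W}

theorem bidiagonal_apply (f : ℤ →₀ V) (p : ℤ) :
    bidiagonal D E f p = D p (f p) + E (p - 1) (f (p - 1)) := by
  induction f using Finsupp.induction_linear with
  | zero => simp
  | add f g hf hg =>
    simp only [map_add, Finsupp.add_apply, hf, hg]
    abel
  | single q v =>
    obtain rfl | hq := eq_or_ne q p
    · simp [bidiagonal]
    · obtain rfl | hq' := eq_or_ne q (p - 1)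
      · simp [bidiagonal]
      · have : q + 1 ≠ p := fun h => hq' (eq_sub_of_add_eq h)
        simp [bidiagonal, hq, hq', this]

theorem bidiagonal_apply_of_mem_supported {m : ℤ} {f : ℤ →₀ V}
    (hf : f ∈ supported V R (Set.Ici m)) : bidiagonal D E f m = D m (f m) := by
  rw [bidiagonal_apply, mem_supported_Ici.1 hf (m - 1) (sub_one_lt m), map_zero, add_zero]

theorem bidiagonal_mem_supported {m : ℤ} {f : ℤ →₀ V} (hf : f ∈ supported V R (Set.Ici m)) :
    bidiagonal D E f ∈ supported W R (Set.Ici m) := by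
  rw [mem_supported_Ici] at hf ⊢
  intro p hp
  rw [bidiagonal_apply, hf p hp, hf (p - 1) (by lia), map_zero, map_zero, add_zero]

theorem mem_supported_Ici_add_one_of_bidiagonal_mem {m : ℤ} (hD : Function.Injective (D m))
    {f : ℤ →₀ V} (hf : f ∈ supported V R (Set.Ici m))
    (him : bidiagonal D E f ∈ supported W R (Set.Ici (m + 1))) :
    f ∈ supported V R (Set.Ici (m + 1)) := by
  have hDf : D m (f m) = 0 := by
    rw [← bidiagonal_apply_of_mem_supported (E := E) hf]
    exact (mem_supported_Ici_add_one.1 him).2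
  exact mem_supported_Ici_add_one.2 ⟨hf, (map_eq_zero_iff (D m) hD).1 hDf⟩

theorem mem_supported_Ici_of_bidiagonal_mem {a : ℤ} (hD : ∀ p < a, Function.Injective (D p))
    {f : ℤ →₀ V} (him : bidiagonal D E f ∈ supported W R (Set.Ici a)) :
    f ∈ supported V R (Set.Ici a) := by
  obtain ⟨m, hma, hfm⟩ := exists_le_mem_supported_Ici (R := R) f a
  induction m, hma using Int.leInductionDown with
  | base => exact hfm
  | pred n hn ih =>
    have himn : bidiagonal D E f ∈ supported W R (Set.Ici n) :=
      Finsupp.supported_mono (Set.Ici_subset_Ici.2 hn) him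
    rw [← sub_add_cancel n 1] at himn
    have hfn := mem_supported_Ici_add_one_of_bidiagonal_mem (hD (n - 1) (by lia)) hfm himn
    rw [sub_add_cancel] at hfn
    exact ih hfn

end Bidiagonal

section BidiagonalRange

variable {R V W : Type*} [Ring R] [AddCommMonoid V] [Module R V] [AddCommGroup W] [Module R W]
  {D E : ℤ → V →ₗ[R] W}

theorem supported_Ici_le_sup_range_bidiagonal {m : ℤ} (hD : Function.Surjective (D m)) :
    supported W R (Set.Ici m) ≤
      supported W R (Set.Ici (m + 1)) ⊔ LinearMap.range (bidiagonal D E) := by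
  intro g hg
  obtain ⟨v, hv⟩ := hD (g m)
  have hsingle : Finsupp.single m v ∈ supported V R (Set.Ici m) :=
    Finsupp.single_mem_supported R v Set.self_mem_Ici
  have hrest : g - bidiagonal D E (Finsupp.single m v) ∈ supported W R (Set.Ici (m + 1)) := by
    refine mem_supported_Ici_add_one.2 ⟨sub_mem hg (bidiagonal_mem_supported hsingle), ?_⟩
    rw [Finsupp.sub_apply, bidiagonal_apply_of_mem_supported hsingle, Finsupp.single_eq_same, hv,
      sub_self]
  exact Submodule.mem_sup.2 ⟨_, hrest, _, LinearMap.mem_range_self _ _, sub_add_cancel _ _⟩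

theorem supported_Ici_sup_range_bidiagonal {a : ℤ} (hD : ∀ p < a, Function.Surjective (D p)) :
    supported W R (Set.Ici a) ⊔ LinearMap.range (bidiagonal D E) = ⊤ := by
  refine eq_top_iff.2 fun g _ => ?_
  suffices ∀ m ≤ a, supported W R (Set.Ici m) ≤
      supported W R (Set.Ici a) ⊔ LinearMap.range (bidiagonal D E) by
    obtain ⟨m, hma, hgm⟩ := exists_le_mem_supported_Ici (R := R) g a
    exact this m hma hgm
  intro m hma
  induction m, hma using Int.leInductionDown with
  | base => exact le_sup_left
  | pred n hn ih =>
    have hstep := supported_Ici_le_sup_range_bidiagonal (E := E) (hD (n - 1) (by lia))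
    rw [sub_add_cancel] at hstep
    exact hstep.trans (sup_le ih le_sup_right)

end BidiagonalRange

theorem isUnit_intCast_of_ne_zero {R : Type*} [Ring R] [Algebra ℚ R] {p : ℤ} (hp : p ≠ 0) :
    IsUnit (p : R) := by
  simpa only [map_intCast] using (IsUnit.mk0 (p : ℚ) (Int.cast_ne_zero.2 hp)).map (algebraMap ℚ R)

section Theta

variable {R V : Type*} [CommRing R] [AddCommGroup V] [Module R V]

/-- The operator `θ = z d/dz + N + z E` on Laurent polynomials with coefficients in `V`. -/
noncomputable def theta (N E : Module.End R V) : Module.End R (ℤ →₀ V) :=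
  bidiagonal (fun p => algebraMap R (Module.End R V) p + N) fun _ => E

theorem theta_apply (N E : Module.End R V) (f : ℤ →₀ V) (p : ℤ) :
    theta N E f p = (p : R) • f p + N (f p) + E (f (p - 1)) := by
  rw [theta, bidiagonal_apply, LinearMap.add_apply, Module.algebraMap_end_apply]

theorem bijective_algebraMap_add_of_isNilpotent {N : Module.End R V} (hN : IsNilpotent N) {c : R}
    (hc : IsUnit c) : Function.Bijective (algebraMap R (Module.End R V) c + N) :=
  (Module.End.isUnit_iff _).1 <|
    hN.isUnit_add_left_of_commute (hc.map _) (Algebra.commutes c N).symm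

variable [Algebra ℚ R] {N E : Module.End R V}

theorem mem_supported_Ici_zero_of_theta_mem (hN : IsNilpotent N) {f : ℤ →₀ V}
    (hθf : theta N E f ∈ supported V R (Set.Ici 0)) : f ∈ supported V R (Set.Ici 0) :=
  mem_supported_Ici_of_bidiagonal_mem (fun _ hp =>
    (bijective_algebraMap_add_of_isNilpotent hN (isUnit_intCast_of_ne_zero hp.ne)).injective) hθf

theorem supported_Ici_zero_sup_range_theta (hN : IsNilpotent N) :
    supported V R (Set.Ici 0) ⊔ LinearMap.range (theta N E) = ⊤ :=
  supported_Ici_sup_range_bidiagonal fun _ hp =>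
    (bijective_algebraMap_add_of_isNilpotent hN (isUnit_intCast_of_ne_zero hp.ne)).surjective

end Theta

theorem theta_laurent_reduction_general {R V : Type*} [CommRing R] [Algebra ℚ R]
    [AddCommGroup V] [Module R V] (N E : V →ₗ[R] V) (hN : IsNilpotent N) :
    (∀ f : ℤ → V, (Function.support f).Finite →
      (∀ p : ℤ, p < 0 → (p : R) • f p + N (f p) + E (f (p - 1)) = 0) →
      ∀ p : ℤ, p < 0 → f p = 0) ∧
    (∀ g : ℤ → V, (Function.support g).Finite →
      ∃ f : ℤ → V, (Function.support f).Finite ∧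
        ∀ p : ℤ, p < 0 → g p = (p : R) • f p + N (f p) + E (f (p - 1))) := by
  refine ⟨fun f hf hθf => ?_, fun g hg => ?_⟩
  · lift f to ℤ →₀ V using hf
    simp only [← theta_apply] at hθf
    exact mem_supported_Ici.1 <|
      mem_supported_Ici_zero_of_theta_mem hN (mem_supported_Ici.2 hθf)
  · lift g to ℤ →₀ V using hg
    have hg : g ∈ supported V R (Set.Ici 0) ⊔ LinearMap.range (theta N E) :=
      supported_Ici_zero_sup_range_theta hN ▸ Submodule.mem_top
    obtain ⟨h, hh, _, ⟨f, rfl⟩, rfl⟩ := Submodule.mem_sup.1 hg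
    refine ⟨f, f.hasFiniteSupport, fun p hp => ?_⟩
    rw [← theta_apply, Finsupp.add_apply, mem_supported_Ici.1 hh p hp, zero_add]

/-- Let `V` be a finite-dimensional `ℂ`-vector space, `N : V → V` nilpotent
and `E : V → V` arbitrary linear maps.  Define `θ` on finitely supported families
`f : ℤ → V` (i.e. on `V[z,z⁻¹]`) by `θ(f)_p = p•f_p + N(f_p) + E(f_{p-1})`.  Then:
(i) every finitely supported `f` with `θ(f) ∈ V[z]` lies in `V[z]` (so the kernels of `θ`
on `V[z,z⁻¹]` and on `V[z]` agree);
(ii) `V[z,z⁻¹] = V[z] + θ(V[z,z⁻¹])`. -/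
theorem theta_laurent_reduction (V : Type*) [AddCommGroup V] [Module ℂ V]
    [FiniteDimensional ℂ V] (N E : V →ₗ[ℂ] V) (hN : IsNilpotent N) :
    (∀ f : ℤ → V, (Function.support f).Finite →
      (∀ p : ℤ, p < 0 → (p : ℂ) • f p + N (f p) + E (f (p - 1)) = 0) →
      ∀ p : ℤ, p < 0 → f p = 0) ∧
    (∀ g : ℤ → V, (Function.support g).Finite →
      ∃ f : ℤ → V, (Function.support f).Finite ∧
        ∀ p : ℤ, p < 0 → g p = (p : ℂ) • f p + N (f p) + E (f (p - 1))) :=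
  theta_laurent_reduction_general N E hN
end
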